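/- arXiv:2405.07080 — 3 statements merged into one kernel-verified Lean document; each statement's English description precedes it below -/
import Mathlib

section
/- Let p be a prime, n ≥ 2, and let q : 𝓗(pⁿ) → 𝓗(pⁿ⁻¹) be componentwise reduction modulo pⁿ⁻¹. For every element h ∈ 𝓗(pⁿ): P(h) = C(h) if and only if h lies in the center Z(𝓗(pⁿ)), where P(h) = P({h}; q). -/
theorem pc_mem_ker_iff {G K : Type*} [Group G] [Group K] (q : G →* K) (s g : G) :
    s⁻¹ * g⁻¹ * s * g ∈ q.ker ↔ Commute (q s) (q g) := by
  rw [MonoidHom.mem_ker]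
  simp only [map_mul, map_inv]
  rw [mul_assoc, ← mul_inv_rev, inv_mul_eq_one, commute_iff_eq]
  exact eq_comm

/-- The `q`-pseudocentralizer of a subset `S` of `G`:
all `g` such that `[s, g] = s⁻¹ * g⁻¹ * s * g ∈ ker q` for all `s ∈ S`. -/
def pseudocentralizer {G K : Type*} [Group G] [Group K] (q : G →* K) (S : Set G) :
    Subgroup G where
  carrier := {g : G | ∀ s ∈ S, s⁻¹ * g⁻¹ * s * g ∈ q.ker}
  one_mem' := fun s _ => by
    rw [pc_mem_ker_iff, map_one]
    exact Commute.one_right _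
  mul_mem' := fun {a b} ha hb s hs => by
    rw [pc_mem_ker_iff, map_mul]
    exact ((pc_mem_ker_iff q s a).mp (ha s hs)).mul_right ((pc_mem_ker_iff q s b).mp (hb s hs))
  inv_mem' := fun {a} ha s hs => by
    rw [pc_mem_ker_iff, map_inv]
    exact ((pc_mem_ker_iff q s a).mp (ha s hs)).inv_right

theorem mem_pseudocentralizer_iff {G K : Type*} [Group G] [Group K] {q : G →* K} {S : Set G}
    {g : G} : g ∈ pseudocentralizer q S ↔ ∀ s ∈ S, s⁻¹ * g⁻¹ * s * g ∈ q.ker := Iff.rfl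

/-- The mod `r` Heisenberg group, as triples `(x, y, z)` over `ZMod r`. -/
@[ext]
structure Heis (r : ℕ) where
  x : ZMod r
  y : ZMod r
  z : ZMod r

namespace Heis

variable {r : ℕ}

private def hmul (a b : Heis r) : Heis r := ⟨a.x + b.x, a.y + b.y + a.x * b.z, a.z + b.z⟩
private def hone : Heis r := ⟨0, 0, 0⟩
private def hinv (a : Heis r) : Heis r := ⟨-a.x, a.x * a.z - a.y, -a.z⟩

instance : Group (Heis r) where
  mul := hmul
  one := hone
  inv := hinv
  mul_assoc a b c := by
    show hmul (hmul a b) c = hmul a (hmul b c)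
    ext <;> (dsimp [hmul]; ring)
  one_mul a := by
    show hmul hone a = a
    ext <;> (dsimp [hmul, hone]; ring)
  mul_one a := by
    show hmul a hone = a
    ext <;> (dsimp [hmul, hone]; ring)
  inv_mul_cancel a := by
    show hmul (hinv a) a = hone
    ext <;> (dsimp [hmul, hinv, hone]; ring)

@[simp] theorem mul_x (a b : Heis r) : (a * b).x = a.x + b.x := rfl
@[simp] theorem mul_y (a b : Heis r) : (a * b).y = a.y + b.y + a.x * b.z := rfl
@[simp] theorem mul_z (a b : Heis r) : (a * b).z = a.z + b.z := rfl
@[simp] theorem one_x : (1 : Heis r).x = 0 := rfl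
@[simp] theorem one_y : (1 : Heis r).y = 0 := rfl
@[simp] theorem one_z : (1 : Heis r).z = 0 := rfl
@[simp] theorem inv_x (a : Heis r) : (a⁻¹).x = -a.x := rfl
@[simp] theorem inv_y (a : Heis r) : (a⁻¹).y = a.x * a.z - a.y := rfl
@[simp] theorem inv_z (a : Heis r) : (a⁻¹).z = -a.z := rfl

/-- Componentwise reduction `Heis r → Heis s` when `s ∣ r`. -/
def heisMap {r s : ℕ} (h : s ∣ r) : Heis r →* Heis s where
  toFun a := ⟨ZMod.castHom h (ZMod s) a.x, ZMod.castHom h (ZMod s) a.y, ZMod.castHom h (ZMod s) a.z⟩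
  map_one' := by
    ext <;> simp only [one_x, one_y, one_z, map_zero]
  map_mul' a b := by
    ext <;> simp only [mul_x, mul_y, mul_z, map_add, map_mul]

end Heis

/-- Componentwise reduction modulo `p ^ (n - 1)` from `Heis (p ^ n)` to `Heis (p ^ (n - 1))`. -/
def heisQ (p n : ℕ) : Heis (p ^ n) →* Heis (p ^ (n - 1)) :=
  Heis.heisMap (pow_dvd_pow p (Nat.sub_le n 1))

/-!
For `h` in the mod `r` Heisenberg group, the commutator of `h` with `g` is governed by
`h.x * g.z - g.x * h.z`, and as `g` varies this runs over the whole ideal `(h.x, h.z)`. Hence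
`P(h) = C(h)` says that this ideal meets the kernel of the reduction `ZMod r → ZMod s` only in `0`.
If `r = d * s`, that kernel is the annihilator of `d`, so `d` acts injectively on `(h.x, h.z)`; when
`d` is nilpotent modulo `r` this forces `(h.x, h.z) = 0`, that is, `h` is central.
-/

theorem mem_pseudocentralizer_singleton_iff {G K : Type*} [Group G] [Group K] {q : G →* K}
    {h g : G} : g ∈ pseudocentralizer q {h} ↔ Commute (q h) (q g) := by
  simp only [mem_pseudocentralizer_iff, Set.mem_singleton_iff, forall_eq, pc_mem_ker_iff]

theorem centralizer_le_pseudocentralizer {G K : Type*} [Group G] [Group K] (q : G →* K)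
    (S : Set G) : Subgroup.centralizer S ≤ pseudocentralizer q S := fun g hg s hs =>
  (pc_mem_ker_iff q s g).mpr (Commute.map (Subgroup.mem_centralizer_iff.mp hg s hs) q)

theorem subsingleton_of_isSMulRegular_of_isNilpotent {R M : Type*} [MonoidWithZero R] [Zero M]
    [MulActionWithZero R M] {a : R} (hreg : IsSMulRegular M a) (hnil : IsNilpotent a) :
    Subsingleton M := by
  obtain ⟨k, hk⟩ := hnil
  exact IsSMulRegular.zero_iff_subsingleton.mp (hk ▸ hreg.pow k)

section Reduction

variable {r s d : ℕ}

theorem mem_ker_zmodCastHom_iff (hr : d * s = r) (hd : d ≠ 0) {a : ZMod r} :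
    a ∈ RingHom.ker (ZMod.castHom (Dvd.intro_left d hr) (ZMod s)) ↔ (d : ZMod r) * a = 0 := by
  obtain ⟨m, rfl⟩ := ZMod.intCast_surjective a
  calc
    _ ↔ (s : ℤ) ∣ m := by rw [RingHom.mem_ker, map_intCast, ZMod.intCast_zmod_eq_zero_iff_dvd]
    _ ↔ (d * s : ℤ) ∣ d * m := (mul_dvd_mul_iff_left (Nat.cast_ne_zero.mpr hd)).symm
    _ ↔ (d : ZMod r) * m = 0 := by
      rw [← Nat.cast_mul, hr, ← ZMod.intCast_zmod_eq_zero_iff_dvd, Int.cast_mul, Int.cast_natCast]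

theorem disjoint_ker_zmodCastHom_iff (hr : d * s = r) (hd : d ≠ 0)
    (hnil : IsNilpotent (d : ZMod r)) {I : Ideal (ZMod r)} :
    Disjoint I (RingHom.ker (ZMod.castHom (Dvd.intro_left d hr) (ZMod s))) ↔ I = ⊥ := by
  refine ⟨fun hI => ?_, fun hI => hI ▸ disjoint_bot_left⟩
  have hreg : IsSMulRegular I (d : ZMod r) := by
    refine IsSMulRegular.of_right_eq_zero_of_smul fun a ha => Subtype.ext ?_
    exact Submodule.disjoint_def.mp hI a a.2
      ((mem_ker_zmodCastHom_iff hr hd).mpr (congrArg Subtype.val ha))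
  exact Submodule.subsingleton_iff_eq_bot.mp
    (subsingleton_of_isSMulRegular_of_isNilpotent hreg hnil)

end Reduction

namespace Heis

variable {r s : ℕ}

theorem commute_iff {a b : Heis r} : Commute a b ↔ a.x * b.z = b.x * a.z := by
  rw [commute_iff_eq, Heis.ext_iff]
  simp only [mul_x, mul_y, mul_z, add_comm b.x a.x, add_comm b.z a.z, add_comm b.y a.y,
    true_and, and_true, add_right_inj]

theorem commute_heisMap_iff (hsr : s ∣ r) {a b : Heis r} :
    Commute (heisMap hsr a) (heisMap hsr b) ↔
      a.x * b.z - b.x * a.z ∈ RingHom.ker (ZMod.castHom hsr (ZMod s)) := by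
  rw [commute_iff, RingHom.mem_ker, map_sub, map_mul, map_mul, sub_eq_zero]
  rfl

theorem mem_center_iff_span_eq_bot {h : Heis r} :
    h ∈ Subgroup.center (Heis r) ↔ Ideal.span {h.x, h.z} = ⊥ := by
  rw [Subgroup.mem_center_iff, Ideal.span_eq_bot]
  constructor
  · intro hcomm
    have hx : h.x = 0 := by simpa using (commute_iff.mp (hcomm ⟨0, 0, 1⟩)).symm
    have hz : h.z = 0 := by simpa using commute_iff.mp (hcomm ⟨1, 0, 0⟩)
    simp [hx, hz]
  · intro hspan g
    have hx : h.x = 0 := hspan h.x (by simp)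
    have hz : h.z = 0 := hspan h.z (by simp)
    exact commute_iff.mpr (by rw [hx, hz, mul_zero, zero_mul])

theorem pseudocentralizer_heisMap_eq_centralizer_iff (hsr : s ∣ r) {h : Heis r} :
    pseudocentralizer (heisMap hsr) {h} = Subgroup.centralizer {h} ↔
      Disjoint (Ideal.span {h.x, h.z}) (RingHom.ker (ZMod.castHom hsr (ZMod s))) := by
  rw [Submodule.disjoint_def]
  constructor
  · intro heq c hc hker
    obtain ⟨u, v, rfl⟩ := Ideal.mem_span_pair.mp hc
    have hsymp : u * h.x + v * h.z = h.x * u - -v * h.z := by ring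
    have hmem : (⟨-v, 0, u⟩ : Heis r) ∈ pseudocentralizer (heisMap hsr) {h} :=
      mem_pseudocentralizer_singleton_iff.mpr ((commute_heisMap_iff hsr).mpr (hsymp ▸ hker))
    rw [heq, Subgroup.mem_centralizer_singleton_iff] at hmem
    rw [hsymp, sub_eq_zero]
    exact commute_iff.mp hmem.symm
  · intro hdisj
    refine le_antisymm (fun g hg => ?_) (centralizer_le_pseudocentralizer _ _)
    have hker := (commute_heisMap_iff hsr).mp (mem_pseudocentralizer_singleton_iff.mp hg)
    have hspan : h.x * g.z - g.x * h.z ∈ Ideal.span {h.x, h.z} :=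
      Ideal.mem_span_pair.mpr ⟨g.z, -g.x, by ring⟩
    have hcomm : Commute h g := commute_iff.mpr (sub_eq_zero.mp (hdisj _ hspan hker))
    exact Subgroup.mem_centralizer_singleton_iff.mpr hcomm.symm

end Heis

theorem statement8_general {r s d : ℕ} (hr : d * s = r) (hd : d ≠ 0)
    (hnil : IsNilpotent (d : ZMod r)) (h : Heis r) :
    pseudocentralizer (Heis.heisMap (Dvd.intro_left d hr)) {h} = Subgroup.centralizer {h} ↔
      h ∈ Subgroup.center (Heis r) := by
  rw [Heis.pseudocentralizer_heisMap_eq_centralizer_iff, disjoint_ker_zmodCastHom_iff hr hd hnil,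
    Heis.mem_center_iff_span_eq_bot]

/-- for every `h ∈ 𝓗(pⁿ)`: `P(h) = C(h)` iff `h ∈ Z(𝓗(pⁿ))`. -/
theorem statement8 (p n : ℕ) (hp : p.Prime) (hn : 2 ≤ n) (h : Heis (p ^ n)) :
    pseudocentralizer (heisQ p n) ({h} : Set (Heis (p ^ n))) =
        Subgroup.centralizer ({h} : Set (Heis (p ^ n))) ↔
      h ∈ Subgroup.center (Heis (p ^ n)) :=
  statement8_general (mul_pow_sub_one (by lia) p) hp.ne_zero
    ⟨n, by rw [← Nat.cast_pow, ZMod.natCast_self]⟩ h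
end

section
/- Let p be a prime and n ≥ 1. Suppose x = (x₁, x₂, x₃) ∈ 𝓗(pⁿ) is non-degenerate, i.e. p does not divide x₁ or p does not divide x₃ (as elements of ℤ/pⁿℤ). Then for every y ∈ 𝓗(pⁿ): y lies in the centralizer C(x) if and only if there exists a unique integer k with 0 ≤ k < pⁿ such that y·(x^k)⁻¹ lies in the center Z(𝓗(pⁿ)). -/
/-!
Two elements of `Heis r` commute iff the determinant of their `(x, z)`-parts vanishes, and `y`
agrees with `x ^ k` modulo the center iff its `(x, z)`-part is `k` times that of `x`. When
`(x.x, x.z)` is unimodular, say `u * x.x + v * x.z = 1`, vanishing of the determinant makes the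
`(x, z)`-part of `y` a multiple of `(x.x, x.z)`, and the only possible factor is
`u * y.x + v * y.z`. Over the local ring `ℤ/pⁿℤ`, a pair is unimodular as soon as one entry is not
divisible by `p`.
-/

theorem existsUnique_eq_mul_and_eq_mul_iff {R : Type*} [CommSemiring R] {a b : R}
    (hab : IsCoprime a b) (c d : R) :
    (∃! t, c = t * a ∧ d = t * b) ↔ a * d = c * b := by
  constructor
  · rintro ⟨t, ⟨rfl, rfl⟩, -⟩
    ring
  · intro hdet
    obtain ⟨u, v, huv⟩ := hab
    refine ⟨u * c + v * d, ⟨?_, ?_⟩, ?_⟩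
    · calc
        c = (u * a + v * b) * c := by rw [huv, one_mul]
        _ = u * a * c + v * (c * b) := by ring
        _ = (u * c + v * d) * a := by rw [← hdet]; ring
    · calc
        d = (u * a + v * b) * d := by rw [huv, one_mul]
        _ = u * (a * d) + v * b * d := by ring
        _ = (u * c + v * d) * b := by rw [hdet]; ring
    · rintro t ⟨rfl, rfl⟩
      calc
        t = t * (u * a + v * b) := by rw [huv, mul_one]
        _ = u * (t * a) + v * (t * b) := by ring

theorem existsUnique_lt_and_natCast_iff {r : ℕ} [NeZero r] (P : ZMod r → Prop) :
    (∃! k : ℕ, k < r ∧ P k) ↔ ∃! t, P t := by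
  constructor
  · rintro ⟨k, ⟨-, hk⟩, huniq⟩
    refine ⟨k, hk, fun t ht => ?_⟩
    rw [← huniq t.val ⟨t.val_lt, by rwa [ZMod.natCast_zmod_val]⟩, ZMod.natCast_zmod_val]
  · rintro ⟨t, ht, huniq⟩
    refine ⟨t.val, ⟨t.val_lt, by rwa [ZMod.natCast_zmod_val]⟩, fun k ⟨hkr, hk⟩ => ?_⟩
    rw [← huniq k hk, ZMod.val_cast_of_lt hkr]

theorem isUnit_of_not_prime_dvd {p n : ℕ} (hp : p.Prime) (hn : 0 < n) {a : ZMod (p ^ n)}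
    (ha : ¬ (p : ZMod (p ^ n)) ∣ a) : IsUnit a := by
  have : NeZero p := ⟨hp.ne_zero⟩
  obtain ⟨m, rfl⟩ := ZMod.natCast_zmod_surjective a
  exact (ZMod.isUnit_natCast_iff_not_dvd_pow hp hn).2 fun h => ha (Nat.cast_dvd_cast h)

theorem isCoprime_of_not_prime_dvd_or_not_prime_dvd {p n : ℕ} (hp : p.Prime) (hn : 0 < n)
    {a b : ZMod (p ^ n)} (h : ¬ (p : ZMod (p ^ n)) ∣ a ∨ ¬ (p : ZMod (p ^ n)) ∣ b) :
    IsCoprime a b :=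
  h.elim
    (fun ha => isCoprime_one_left.of_isCoprime_of_dvd_left (isUnit_of_not_prime_dvd hp hn ha).dvd)
    (fun hb => isCoprime_one_right.of_isCoprime_of_dvd_right (isUnit_of_not_prime_dvd hp hn hb).dvd)

namespace Heis

variable {r : ℕ}

@[simp] theorem pow_x (a : Heis r) (k : ℕ) : (a ^ k).x = k * a.x := by
  induction k with
  | zero => simp
  | succ k ih => simp [pow_succ, ih, add_mul]

@[simp] theorem pow_z (a : Heis r) (k : ℕ) : (a ^ k).z = k * a.z := by
  induction k with
  | zero => simp
  | succ k ih => simp [pow_succ, ih, add_mul]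

theorem mul_comm_iff (a b : Heis r) : a * b = b * a ↔ a.x * b.z = b.x * a.z := by
  simp only [Heis.ext_iff, mul_x, mul_y, mul_z, add_comm b.x, add_comm b.y, add_comm b.z,
    add_right_inj, true_and, and_true]

theorem mem_centralizer_singleton_iff (a b : Heis r) :
    b ∈ Subgroup.centralizer ({a} : Set (Heis r)) ↔ a.x * b.z = b.x * a.z := by
  rw [Subgroup.mem_centralizer_singleton_iff, eq_comm, mul_comm_iff]

theorem mem_center_iff (a : Heis r) :
    a ∈ Subgroup.center (Heis r) ↔ a.x = 0 ∧ a.z = 0 := by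
  simp only [Subgroup.mem_center_iff, mul_comm_iff]
  refine ⟨fun h => ⟨?_, ?_⟩, fun ⟨hx, hz⟩ g => by simp [hx, hz]⟩
  · simpa using (h ⟨0, 0, 1⟩).symm
  · simpa using h ⟨1, 0, 0⟩

theorem mul_inv_pow_mem_center_iff (a b : Heis r) (k : ℕ) :
    b * (a ^ k)⁻¹ ∈ Subgroup.center (Heis r) ↔ b.x = k * a.x ∧ b.z = k * a.z := by
  simp [mem_center_iff, ← sub_eq_add_neg, sub_eq_zero]

end Heis

theorem statement13_general {r : ℕ} [NeZero r] (x : Heis r) (hx : IsCoprime x.x x.z)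
    (y : Heis r) :
    y ∈ Subgroup.centralizer ({x} : Set (Heis r)) ↔
      ∃! k : ℕ, k < r ∧ y * (x ^ k)⁻¹ ∈ Subgroup.center (Heis r) := by
  simp only [Heis.mem_centralizer_singleton_iff, Heis.mul_inv_pow_mem_center_iff]
  rw [existsUnique_lt_and_natCast_iff fun t => y.x = t * x.x ∧ y.z = t * x.z,
    existsUnique_eq_mul_and_eq_mul_iff hx]

/-- if `x ∈ 𝓗(pⁿ)` is non-degenerate (`p ∤ x₁` or `p ∤ x₃` in `ℤ/pⁿℤ`), then for
every `y`: `y ∈ C(x)` iff there is a unique `0 ≤ k < pⁿ` with `y * (x^k)⁻¹ ∈ Z(𝓗(pⁿ))`. -/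
theorem statement13 (p n : ℕ) (hp : p.Prime) (hn : 1 ≤ n) (x : Heis (p ^ n))
    (hx : ¬ (p : ZMod (p ^ n)) ∣ x.x ∨ ¬ (p : ZMod (p ^ n)) ∣ x.z) (y : Heis (p ^ n)) :
    y ∈ Subgroup.centralizer ({x} : Set (Heis (p ^ n))) ↔
      ∃! k : ℕ, k < p ^ n ∧ y * (x ^ k)⁻¹ ∈ Subgroup.center (Heis (p ^ n)) := by
  have : NeZero p := ⟨hp.ne_zero⟩
  exact statement13_general x (isCoprime_of_not_prime_dvd_or_not_prime_dvd hp hn hx) y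
end

section
/- Let p be a prime, n ≥ 2, and consider the short exact sequence 1 → (ℤ/pℤ)³ →f 𝓗(pⁿ) →q 𝓗(pⁿ⁻¹) → 1, where q is componentwise reduction modulo pⁿ⁻¹. For every subgroup H of 𝓗(pⁿ⁻¹), the pseudo Chermak-Delgado measure satisfies m_s(q⁻¹(H)) = p⁶ · m(H), where m(H) = |H| · |C(H)| is the Chermak-Delgado measure of H in 𝓗(pⁿ⁻¹). -/
/-! Modulo `ker q`, two elements commute exactly when their images under `q` do, so the
pseudocentralizer of `q⁻¹(H)` is the full preimage `q⁻¹(C(H))`. Taking preimages under a surjection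
multiplies the order by `|ker q|`, hence both factors of `m(H)` are multiplied by `|ker q|`, which
is `(r / s)³` for the reduction `𝓗(r) → 𝓗(s)`. -/

section Measures

variable {G K : Type*} [Group G] [Group K]

/-- The Chermak–Delgado measure `m(H) = |H| · |C(H)|`. -/
noncomputable def chermakDelgadoMeasure (H : Subgroup G) : ℕ :=
  Nat.card H * Nat.card (Subgroup.centralizer (H : Set G))

/-- The pseudo Chermak–Delgado measure `m_s(H) = |H| · |P(H; q)|`. -/
noncomputable def pseudoChermakDelgadoMeasure (q : G →* K) (H : Subgroup G) : ℕ :=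
  Nat.card H * Nat.card (pseudocentralizer q (H : Set G))

theorem pseudocentralizer_eq_comap_centralizer_image (q : G →* K) (S : Set G) :
    pseudocentralizer q S = (Subgroup.centralizer (q '' S)).comap q := by
  ext g
  simp only [mem_pseudocentralizer_iff, pc_mem_ker_iff, commute_iff_eq, Subgroup.mem_comap,
    Subgroup.mem_centralizer_iff, Set.forall_mem_image]

theorem pseudocentralizer_comap_of_le_range {q : G →* K} {H : Subgroup K} (hH : H ≤ q.range) :
    pseudocentralizer q (H.comap q : Set G) = (Subgroup.centralizer (H : Set K)).comap q := by
  rw [pseudocentralizer_eq_comap_centralizer_image, ← Subgroup.coe_map,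
    Subgroup.map_comap_eq_self hH]

theorem card_comap_of_le_range {q : G →* K} {H : Subgroup K} (hH : H ≤ q.range) :
    Nat.card (H.comap q) = Nat.card q.ker * Nat.card H := by
  have hindex : q.ker.relIndex (H.comap q) = Nat.card H := by
    rw [Subgroup.relIndex_ker, Subgroup.map_comap_eq_self hH]
  rw [← hindex, ← Subgroup.relIndex_bot_left, ← Subgroup.relIndex_bot_left,
    Subgroup.relIndex_mul_relIndex _ _ _ bot_le (Subgroup.ker_le_comap q H)]

theorem pseudoChermakDelgadoMeasure_comap {q : G →* K} (hq : Function.Surjective q)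
    (H : Subgroup K) :
    pseudoChermakDelgadoMeasure q (H.comap q) =
      Nat.card q.ker ^ 2 * chermakDelgadoMeasure H := by
  have le_range (L : Subgroup K) : L ≤ q.range := by simp only [q.range_eq_top.2 hq, le_top]
  rw [pseudoChermakDelgadoMeasure, pseudocentralizer_comap_of_le_range (le_range _),
    card_comap_of_le_range (le_range _), card_comap_of_le_range (le_range _),
    chermakDelgadoMeasure]
  ring

end Measures

namespace Heis

/-- The identification of the underlying set of `Heis r` with `(ZMod r)³`, used to count it. -/
def equivProd (r : ℕ) : Heis r ≃ ZMod r × ZMod r × ZMod r where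
  toFun a := (a.x, a.y, a.z)
  invFun t := ⟨t.1, t.2.1, t.2.2⟩

theorem card_heis (r : ℕ) : Nat.card (Heis r) = r ^ 3 := by
  rw [Nat.card_congr (equivProd r), Nat.card_prod, Nat.card_prod, Nat.card_zmod]
  ring

theorem heisMap_surjective {r s : ℕ} (h : s ∣ r) : Function.Surjective (heisMap h) := by
  intro b
  obtain ⟨x, hx⟩ := ZMod.castHom_surjective h b.x
  obtain ⟨y, hy⟩ := ZMod.castHom_surjective h b.y
  obtain ⟨z, hz⟩ := ZMod.castHom_surjective h b.z
  exact ⟨⟨x, y, z⟩, Heis.ext hx hy hz⟩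

theorem card_ker_heisMap {r s : ℕ} (hs : s ≠ 0) (h : s ∣ r) :
    Nat.card (heisMap h).ker = (r / s) ^ 3 := by
  have hcard : Nat.card (heisMap h).ker * s ^ 3 = r ^ 3 := by
    rw [← card_heis s, ← card_heis r, ← (heisMap h).ker.card_mul_index, Subgroup.index_ker,
      (heisMap h).range_eq_top.2 (heisMap_surjective h), Subgroup.card_top]
  rw [Nat.div_pow h]
  exact Nat.eq_div_of_mul_eq_left (pow_ne_zero 3 hs) hcard

end Heis

theorem statement17_general {r s : ℕ} (hr : r ≠ 0) (h : s ∣ r) (H : Subgroup (Heis s)) :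
    pseudoChermakDelgadoMeasure (Heis.heisMap h) (H.comap (Heis.heisMap h)) =
      (r / s) ^ 6 * chermakDelgadoMeasure H := by
  rw [pseudoChermakDelgadoMeasure_comap (Heis.heisMap_surjective h),
    Heis.card_ker_heisMap (ne_zero_of_dvd_ne_zero hr h), ← pow_mul]

/-- for the short exact sequence `1 → (ℤ/pℤ)³ → 𝓗(pⁿ) → 𝓗(pⁿ⁻¹) → 1` and every
subgroup `H ≤ 𝓗(pⁿ⁻¹)`: `m_s(q⁻¹(H)) = p⁶ * m(H)`. -/
theorem statement17 (p n : ℕ) (hp : p.Prime) (hn : 2 ≤ n)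
    (H : Subgroup (Heis (p ^ (n - 1)))) :
    Nat.card (H.comap (heisQ p n)) *
        Nat.card (pseudocentralizer (heisQ p n)
          ((H.comap (heisQ p n) : Subgroup (Heis (p ^ n))) : Set (Heis (p ^ n)))) =
      p ^ 6 * (Nat.card H *
        Nat.card (Subgroup.centralizer (H : Set (Heis (p ^ (n - 1)))))) := by
  have h := statement17_general (pow_ne_zero n hp.ne_zero) (pow_dvd_pow p (n.sub_le 1)) H
  rwa [Nat.pow_div (n.sub_le 1) hp.pos, Nat.sub_sub_self (by lia), pow_one] at h
end
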